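/- Let G be a simple graph on a finite vertex set V, let v₀ ∈ V, and suppose V = A ∪ B with A ∩ B = {v₀}, |A| = n₁ ≥ 1, |B| = n₂ ≥ 1, such that every edge of G lies entirely within A or entirely within B (so G is the wedge sum G[A] ∨ G[B] at v₀). Then β_G(x) = (1+x)^{n₁−1}·β_{G[B]}(x) + (1+x)^{n₂−1}·β_{G[A]}(x) − (1+x)^{n₁+n₂−2} as polynomials with integer coefficients. -/

import Mathlib

open Polynomial

/-- `islandF G S` is the quantity `f_G(S) = 2·c_G(S) + e_G(S) − |S|`, where `c_G(S)`
and `e_G(S)` are the numbers of connected components and edges of the induced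
subgraph `G[S]`.  For a planar graph it equals the total number of faces of a
planar embedding of `G[S]`, summed over connected components. -/
noncomputable def islandF {V : Type*} [Fintype V] [DecidableEq V]
    (G : SimpleGraph V) (S : Finset V) : ℤ :=
  2 * Nat.card ((G.induce (S : Set V)).ConnectedComponent)
    + Nat.card ((G.induce (S : Set V)).edgeSet) - S.card

/-- The total island boundary polynomial `β_G(x) = Σ_{∅ ≠ S ⊆ V} f_G(S)·x^{|S|−1}`. -/
noncomputable def islandPoly {V : Type*} [Fintype V] [DecidableEq V]
    (G : SimpleGraph V) : Polynomial ℤ :=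
  ∑ S ∈ Finset.univ.powerset.filter (fun S : Finset V => S.Nonempty),
    Polynomial.C (islandF G S) * Polynomial.X ^ (S.card - 1)

/-!
If `(A, B)` is a separation of `G` whose overlap `K = A ∩ B` is a clique, then
`f_G(S) + f_G(S ∩ K) = f_G(S ∩ A) + f_G(S ∩ B)` for every `S`. For vertices and edges this is
inclusion-exclusion. For components, those of `G[S]` missing `K` are exactly those of `G[S ∩ A]` and
of `G[S ∩ B]` missing `K`, while each of the four induced graphs has exactly one component meeting
`K` if `S` meets `K`, and none otherwise.

The polynomial `X * β_G` is the generating function `∑ S, f_G(S) X ^ |S|`. Summing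
`f_G(S ∩ A) X ^ |S|` over all `S` leaves the part of `S` outside `A` free, which contributes the
factor `(1 + X) ^ |Aᶜ|`. A wedge is the case where `K` is a single vertex, whose own polynomial
is `1`.
-/

section Components

variable {V : Type*} {G : SimpleGraph V} {A B K S T U : Set V}

/-- `T` is a union of connected components of `G[S]`: no edge of `G[S]` leaves `T`. -/
def IsAdjClosed (G : SimpleGraph V) (S T : Set V) : Prop :=
  T ⊆ S ∧ ∀ ⦃a b⦄, a ∈ T → b ∈ S → G.Adj a b → b ∈ T

/-- The vertex sets of the connected components of `G[S]`, as subsets of `V` rather than of `S`,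
so that the components of different induced subgraphs can be compared. -/
def componentSets (G : SimpleGraph V) (S : Set V) : Set (Set V) :=
  Set.range fun C : (G.induce S).ConnectedComponent => Subtype.val '' C.supp

/-- `(A, B)` is a separation of `G`: the sets `A` and `B` cover the vertices, and every edge lies
within one of them. -/
structure IsSeparation (G : SimpleGraph V) (A B : Set V) : Prop where
  union_eq_univ : A ∪ B = Set.univ
  mem_of_adj : ∀ a b, G.Adj a b → (a ∈ A ∧ b ∈ A) ∨ (a ∈ B ∧ b ∈ B)

lemma IsAdjClosed.inter (hT : IsAdjClosed G S T) (hU : IsAdjClosed G S U) :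
    IsAdjClosed G S (T ∩ U) :=
  ⟨Set.inter_subset_left.trans hT.1,
    fun _ _ ha hb hab => ⟨hT.2 ha.1 hb hab, hU.2 ha.2 hb hab⟩⟩

lemma IsAdjClosed.mem_of_reachable (hT : IsAdjClosed G S T) {x y : S} (hx : x.1 ∈ T)
    (hxy : (G.induce S).Reachable x y) : y.1 ∈ T := by
  rw [SimpleGraph.reachable_iff_reflTransGen] at hxy
  induction hxy with
  | refl => exact hx
  | @tail b c _ hbc ih => exact hT.2 ih c.2 hbc

lemma isAdjClosed_image_supp (C : (G.induce S).ConnectedComponent) :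
    IsAdjClosed G S (Subtype.val '' C.supp) := by
  refine ⟨Subtype.coe_image_subset _ _, ?_⟩
  rintro _ b ⟨a, ha, rfl⟩ hb hab
  exact ⟨⟨b, hb⟩, C.mem_supp_of_adj_mem_supp ha hab, rfl⟩

lemma mem_componentSets_iff_minimal :
    T ∈ componentSets G S ↔ Minimal (fun U => U.Nonempty ∧ IsAdjClosed G S U) T := by
  constructor
  · rintro ⟨C, rfl⟩
    refine ⟨⟨C.nonempty_supp.image _, isAdjClosed_image_supp C⟩, ?_⟩
    rintro U ⟨⟨x, hxU⟩, hU⟩ hUC _ ⟨y, hy, rfl⟩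
    obtain ⟨x, hx, rfl⟩ := hUC hxU
    exact hU.mem_of_reachable hxU (C.reachable_of_mem_supp hx hy)
  · rintro ⟨⟨⟨x, hxT⟩, hT⟩, hmin⟩
    let C := (G.induce S).connectedComponentMk ⟨x, hT.1 hxT⟩
    have hCT : Subtype.val '' C.supp ⊆ T := by
      rintro _ ⟨y, hy, rfl⟩
      exact hT.mem_of_reachable hxT (C.reachable_of_mem_supp rfl hy)
    exact ⟨C, hCT.antisymm <|
      hmin ⟨C.nonempty_supp.image _, isAdjClosed_image_supp C⟩ hCT⟩

lemma nonempty_of_mem_componentSets (hT : T ∈ componentSets G S) : T.Nonempty :=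
  (mem_componentSets_iff_minimal.1 hT).prop.1

lemma isAdjClosed_of_mem_componentSets (hT : T ∈ componentSets G S) : IsAdjClosed G S T :=
  (mem_componentSets_iff_minimal.1 hT).prop.2

lemma subset_of_mem_componentSets (hT : T ∈ componentSets G S) (hU : IsAdjClosed G S U)
    (hTU : (T ∩ U).Nonempty) : T ⊆ U := by
  have hT' := mem_componentSets_iff_minimal.1 hT
  exact Set.inter_eq_left.1 <| hT'.eq_of_subset ⟨hTU, hT'.prop.2.inter hU⟩ Set.inter_subset_left

lemma exists_mem_componentSets {v : V} (hv : v ∈ S) : ∃ T ∈ componentSets G S, v ∈ T :=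
  ⟨_, ⟨(G.induce S).connectedComponentMk ⟨v, hv⟩, rfl⟩, ⟨v, hv⟩, rfl, rfl⟩

lemma ncard_componentSets :
    (componentSets G S).ncard = Nat.card (G.induce S).ConnectedComponent := by
  rw [componentSets, ← Set.image_univ, Set.ncard_image_of_injective, Set.ncard_univ]
  exact (Set.image_injective.2 Subtype.val_injective).comp
    SimpleGraph.ConnectedComponent.supp_injective

open Classical in
lemma ncard_componentSets_meeting_clique (hK : G.IsClique K) :
    {T ∈ componentSets G S | ¬Disjoint T K}.ncard = if (S ∩ K).Nonempty then 1 else 0 := by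
  have unique_of_meets : ∀ T ∈ componentSets G S, ¬Disjoint T K →
      ∀ U ∈ componentSets G S, ¬Disjoint U K → T ⊆ U := by
    intro T hT hTK U hU hUK
    obtain ⟨a, haT, haK⟩ := Set.not_disjoint_iff.1 hTK
    obtain ⟨b, hbU, hbK⟩ := Set.not_disjoint_iff.1 hUK
    have hTS := isAdjClosed_of_mem_componentSets hT
    have hUS := isAdjClosed_of_mem_componentSets hU
    refine subset_of_mem_componentSets hT hUS ⟨a, haT, ?_⟩
    obtain rfl | hne := eq_or_ne b a
    · exact hbU
    · exact hUS.2 hbU (hTS.1 haT) (hK hbK haK hne)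
  split_ifs with h
  · obtain ⟨v, hvS, hvK⟩ := h
    obtain ⟨T, hT, hvT⟩ := exists_mem_componentSets (G := G) hvS
    have hTK : ¬Disjoint T K := Set.not_disjoint_iff.2 ⟨v, hvT, hvK⟩
    refine Set.ncard_eq_one.2 ⟨T, Set.eq_singleton_iff_unique_mem.2 ⟨⟨hT, hTK⟩, ?_⟩⟩
    rintro U ⟨hU, hUK⟩
    exact (unique_of_meets U hU hUK T hT hTK).antisymm (unique_of_meets T hT hTK U hU hUK)
  · have : {T ∈ componentSets G S | ¬Disjoint T K} = ∅ := by
      refine Set.eq_empty_of_forall_notMem fun T ⟨hT, hTK⟩ => h ?_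
      obtain ⟨v, hvT, hvK⟩ := Set.not_disjoint_iff.1 hTK
      exact ⟨v, (isAdjClosed_of_mem_componentSets hT).1 hvT, hvK⟩
    rw [this, Set.ncard_empty]

open Classical in
lemma card_connectedComponent_induce_eq [Finite V] (hK : G.IsClique K) (S : Set V) :
    Nat.card (G.induce S).ConnectedComponent
      = {T ∈ componentSets G S | Disjoint T K}.ncard + if (S ∩ K).Nonempty then 1 else 0 := by
  rw [← ncard_componentSets, ← ncard_componentSets_meeting_clique hK,
    ← Set.ncard_inter_add_ncard_sdiff_eq_ncard (componentSets G S) {T | Disjoint T K}]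
  rfl

lemma IsSeparation.symm (h : IsSeparation G A B) : IsSeparation G B A :=
  ⟨Set.union_comm A B ▸ h.union_eq_univ, fun a b hab => (h.mem_of_adj a b hab).symm⟩

lemma IsSeparation.mem_left_of_adj (h : IsSeparation G A B) {a b : V} (hab : G.Adj a b)
    (haA : a ∈ A) (ha : a ∉ A ∩ B) : b ∈ A :=
  (h.mem_of_adj a b hab).elim And.right fun hB => absurd ⟨haA, hB.1⟩ ha

lemma IsSeparation.isAdjClosed_inter_left_iff (h : IsSeparation G A B)
    (hU : Disjoint U (A ∩ B)) :
    IsAdjClosed G (S ∩ A) U ↔ IsAdjClosed G S U ∧ U ⊆ A := by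
  constructor
  · rintro ⟨hUS, hclosed⟩
    rw [Set.subset_inter_iff] at hUS
    exact ⟨⟨hUS.1, fun a b ha hb hab => hclosed ha
      ⟨hb, h.mem_left_of_adj hab (hUS.2 ha) (hU.notMem_of_mem_left ha)⟩ hab⟩, hUS.2⟩
  · rintro ⟨⟨hUS, hclosed⟩, hUA⟩
    exact ⟨Set.subset_inter hUS hUA, fun a b ha hb hab => hclosed ha hb.1 hab⟩

lemma IsSeparation.mem_componentSets_inter_left_iff (h : IsSeparation G A B)
    (hT : Disjoint T (A ∩ B)) :
    T ∈ componentSets G (S ∩ A) ↔ T ∈ componentSets G S ∧ T ⊆ A := by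
  simp only [mem_componentSets_iff_minimal, minimal_iff_forall_lt]
  constructor
  · rintro ⟨⟨hne, hTS⟩, hmin⟩
    obtain ⟨hTS, hTA⟩ := (h.isAdjClosed_inter_left_iff hT).1 hTS
    exact ⟨⟨⟨hne, hTS⟩, fun U hUT hU => hmin hUT ⟨hU.1, (h.isAdjClosed_inter_left_iff
      (hT.mono_left hUT.subset)).2 ⟨hU.2, hUT.subset.trans hTA⟩⟩⟩, hTA⟩
  · rintro ⟨⟨⟨hne, hTS⟩, hmin⟩, hTA⟩
    exact ⟨⟨hne, (h.isAdjClosed_inter_left_iff hT).2 ⟨hTS, hTA⟩⟩, fun U hUT hU =>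
      hmin hUT ⟨hU.1, ((h.isAdjClosed_inter_left_iff (hT.mono_left hUT.subset)).1 hU.2).1⟩⟩

lemma IsSeparation.mem_componentSets_inter_right_iff (h : IsSeparation G A B)
    (hT : Disjoint T (A ∩ B)) :
    T ∈ componentSets G (S ∩ B) ↔ T ∈ componentSets G S ∧ T ⊆ B :=
  h.symm.mem_componentSets_inter_left_iff (Set.inter_comm A B ▸ hT)

lemma IsSeparation.subset_or_subset_of_mem_componentSets (h : IsSeparation G A B)
    (hT : T ∈ componentSets G S) (hTAB : Disjoint T (A ∩ B)) : T ⊆ A ∨ T ⊆ B := by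
  have hTS := isAdjClosed_of_mem_componentSets hT
  obtain hTA | hTA := (T ∩ A).eq_empty_or_nonempty
  · exact .inr <| (Set.disjoint_iff_inter_eq_empty.2 hTA).subset_right_of_subset_union
      (h.union_eq_univ ▸ T.subset_univ)
  · have hclosed : IsAdjClosed G S (T ∩ A) :=
      ⟨Set.inter_subset_left.trans hTS.1, fun a b ha hb hab => ⟨hTS.2 ha.1 hb hab,
        h.mem_left_of_adj hab ha.2 (hTAB.notMem_of_mem_left ha.1)⟩⟩
    exact .inl <| (subset_of_mem_componentSets hT hclosed
      (by rwa [← Set.inter_assoc, Set.inter_self])).trans Set.inter_subset_right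

lemma IsSeparation.ncard_componentSets_disjoint [Finite V] (h : IsSeparation G A B) (S : Set V) :
    {T ∈ componentSets G S | Disjoint T (A ∩ B)}.ncard
      = {T ∈ componentSets G (S ∩ A) | Disjoint T (A ∩ B)}.ncard
        + {T ∈ componentSets G (S ∩ B) | Disjoint T (A ∩ B)}.ncard := by
  rw [← Set.ncard_union_eq]
  · congr 1
    ext T
    simp only [Set.mem_union, Set.mem_ofPred_eq, ← or_and_right]
    refine and_congr_left fun hT => ?_
    rw [h.mem_componentSets_inter_left_iff hT, h.mem_componentSets_inter_right_iff hT,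
      ← and_or_left]
    exact (and_iff_left_of_imp fun hTS => h.subset_or_subset_of_mem_componentSets hTS hT).symm
  · refine Set.disjoint_left.2 fun T ⟨hTA, hT⟩ ⟨hTB, _⟩ => ?_
    obtain ⟨v, hv⟩ := nonempty_of_mem_componentSets hTA
    exact hT.notMem_of_mem_left hv
      ⟨((h.mem_componentSets_inter_left_iff hT).1 hTA).2 hv,
        ((h.mem_componentSets_inter_right_iff hT).1 hTB).2 hv⟩

lemma IsSeparation.card_connectedComponent_add [Finite V] (h : IsSeparation G A B)
    (hAB : G.IsClique (A ∩ B)) (S : Set V) :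
    Nat.card (G.induce S).ConnectedComponent
        + Nat.card (G.induce (S ∩ (A ∩ B))).ConnectedComponent
      = Nat.card (G.induce (S ∩ A)).ConnectedComponent
        + Nat.card (G.induce (S ∩ B)).ConnectedComponent := by
  have hempty : {T ∈ componentSets G (S ∩ (A ∩ B)) | Disjoint T (A ∩ B)} = ∅ := by
    refine Set.eq_empty_of_forall_notMem fun T ⟨hT, hTAB⟩ => ?_
    have hTsub := (isAdjClosed_of_mem_componentSets hT).1.trans Set.inter_subset_right
    exact (nonempty_of_mem_componentSets hT).ne_empty (hTAB.eq_bot_of_le hTsub)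
  have hA : S ∩ A ∩ (A ∩ B) = S ∩ (A ∩ B) := by grind
  have hB : S ∩ B ∩ (A ∩ B) = S ∩ (A ∩ B) := by grind
  have hS : S ∩ (A ∩ B) ∩ (A ∩ B) = S ∩ (A ∩ B) := by grind
  rw [card_connectedComponent_induce_eq hAB S, card_connectedComponent_induce_eq hAB (S ∩ A),
    card_connectedComponent_induce_eq hAB (S ∩ B),
    card_connectedComponent_induce_eq hAB (S ∩ (A ∩ B)), hA, hB, hS, hempty, Set.ncard_empty,
    h.ncard_componentSets_disjoint S]
  omega

end Components

section EdgeCount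

variable {V : Type*} {G : SimpleGraph V}

open Classical in
lemma card_edgeSet_induce (G : SimpleGraph V) (S : Finset V) :
    Nat.card (G.induce (S : Set V)).edgeSet = {e ∈ S.sym2 | e ∈ G.edgeSet}.card := by
  let f := SimpleGraph.Embedding.induce (G := G) (S : Set V)
  have himage : Sym2.map f '' (G.induce (S : Set V)).edgeSet
      = ({e ∈ S.sym2 | e ∈ G.edgeSet} : Finset (Sym2 V)) := by
    ext e
    rw [Finset.mem_coe, Finset.mem_filter]
    constructor
    · rintro ⟨⟨x, y⟩, hxy, rfl⟩
      exact ⟨Finset.mk_mem_sym2_iff.2 ⟨x.2, y.2⟩, hxy⟩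
    · obtain ⟨a, b⟩ := e
      rintro ⟨hS, hab⟩
      obtain ⟨ha, hb⟩ := Finset.mk_mem_sym2_iff.1 hS
      exact ⟨s(⟨a, ha⟩, ⟨b, hb⟩), hab, rfl⟩
  rw [← Set.ncard_coe_finset, ← himage,
    Set.ncard_image_of_injective _ (Sym2.map.injective f.injective)]
  rfl

lemma IsSeparation.card_edgeSet_add [DecidableEq V] {A B : Finset V}
    (h : IsSeparation G (A : Set V) B) (S : Finset V) :
    Nat.card (G.induce (S : Set V)).edgeSet
        + Nat.card (G.induce ((S ∩ (A ∩ B) : Finset V) : Set V)).edgeSet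
      = Nat.card (G.induce ((S ∩ A : Finset V) : Set V)).edgeSet
        + Nat.card (G.induce ((S ∩ B : Finset V) : Set V)).edgeSet := by
  classical
  simp only [card_edgeSet_induce]
  rw [← Finset.card_union_add_card_inter {e ∈ (S ∩ A).sym2 | e ∈ G.edgeSet}]
  congr 2 <;> ext ⟨a, b⟩
  · have := h.mem_of_adj a b
    simp only [Finset.mem_coe] at this
    simp only [Finset.mem_filter, Finset.mem_union, Finset.mem_inter, SimpleGraph.mem_edgeSet,
      Finset.mk_mem_sym2_iff]
    tauto
  · simp only [Finset.mem_filter, Finset.mem_inter, Finset.mk_mem_sym2_iff]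
    tauto

end EdgeCount

section IslandF

variable {V W : Type*} [Fintype V] [DecidableEq V] [Fintype W] [DecidableEq W]
  {G : SimpleGraph V} {A B : Finset V}

lemma IsSeparation.islandF_add (h : IsSeparation G (A : Set V) B)
    (hAB : G.IsClique ((A ∩ B : Finset V) : Set V)) (S : Finset V) :
    islandF G S + islandF G (S ∩ (A ∩ B)) = islandF G (S ∩ A) + islandF G (S ∩ B) := by
  have hcover : A ∪ B = Finset.univ := mod_cast h.union_eq_univ
  have hcomponents := h.card_connectedComponent_add (by rwa [← Finset.coe_inter]) S
  rw [← Finset.coe_inter A B, ← Finset.coe_inter S A, ← Finset.coe_inter S B,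
    ← Finset.coe_inter S (A ∩ B)] at hcomponents
  have hedges := h.card_edgeSet_add S
  have hvertices := Finset.card_union_add_card_inter (S ∩ A) (S ∩ B)
  rw [← Finset.inter_union_distrib_left, hcover, Finset.inter_univ,
    ← Finset.inter_inter_distrib_left] at hvertices
  unfold islandF
  omega

lemma islandF_empty (G : SimpleGraph V) : islandF G ∅ = 0 := by
  have : IsEmpty ((∅ : Finset V) : Set V) := by simp
  have : IsEmpty (G.induce ((∅ : Finset V) : Set V)).ConnectedComponent := Quot.instIsEmpty
  simp [islandF]

lemma islandF_singleton (G : SimpleGraph V) (v : V) : islandF G {v} = 1 := by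
  have : Nonempty (({v} : Finset V) : Set V) := by simp
  have : Subsingleton (({v} : Finset V) : Set V) := by simp
  have hcomponents : Nat.card (G.induce (({v} : Finset V) : Set V)).ConnectedComponent = 1 :=
    Nat.card_eq_one_iff_unique.2 ⟨inferInstance, inferInstance⟩
  have hedges : Nat.card (G.induce (({v} : Finset V) : Set V)).edgeSet = 0 := by
    simp [Subsingleton.elim (G.induce (({v} : Finset V) : Set V)) ⊥]
  rw [islandF, hcomponents, hedges, Finset.card_singleton]
  norm_num

lemma islandF_map {H : SimpleGraph W} (f : H ↪g G) (S : Finset W) :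
    islandF G (S.map f.toEmbedding) = islandF H S := by
  have hrange : Set.range (f.comp (SimpleGraph.Embedding.induce (S : Set W)))
      = (S.map f.toEmbedding : Finset V) := by
    ext; simp
  have e := (f.comp (SimpleGraph.Embedding.induce (S : Set W))).isoInduceRange
  rw [hrange] at e
  simp only [islandF, Nat.card_congr e.connectedComponentEquiv, Nat.card_congr e.mapEdgeSet,
    Finset.card_map]

end IslandF

section IslandPoly

variable {V : Type*} [Fintype V] [DecidableEq V]

lemma sum_inter_mul_pow_card {R : Type*} [CommSemiring R] (f : Finset V → R) (x : R)
    (A : Finset V) :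
    ∑ S : Finset V, f (S ∩ A) * x ^ S.card
      = (1 + x) ^ Aᶜ.card * ∑ T ∈ A.powerset, f T * x ^ T.card := by
  have hbinom : (1 + x) ^ Aᶜ.card = ∑ U ∈ Aᶜ.powerset, x ^ U.card := by
    simpa [add_comm] using (Finset.sum_pow_mul_eq_add_pow x 1 Aᶜ).symm
  rw [hbinom, Finset.sum_mul_sum, ← Finset.sum_product']
  refine Finset.sum_nbij' (fun S => (S \ A, S ∩ A)) (fun p => p.1 ∪ p.2)
    (by grind [Finset.mem_compl]) (by simp) (by grind)
    (fun ⟨U, T⟩ hUT => Prod.ext (by grind [Finset.mem_compl]) (by grind [Finset.mem_compl]))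
    fun S _ => ?_
  rw [← Finset.card_sdiff_add_card_inter S A, pow_add]
  ring

lemma X_mul_islandPoly (G : SimpleGraph V) :
    X * islandPoly G = ∑ S : Finset V, C (islandF G S) * X ^ S.card := by
  rw [islandPoly, Finset.powerset_univ, Finset.mul_sum, Finset.sum_filter]
  refine Finset.sum_congr rfl fun S _ => ?_
  obtain rfl | hS := S.eq_empty_or_nonempty
  · simp [islandF_empty]
  · rw [if_pos hS, mul_left_comm, mul_pow_sub_one hS.card_ne_zero]

lemma X_mul_islandPoly_induce (G : SimpleGraph V) (A : Finset V) :
    X * islandPoly (G.induce (A : Set V))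
      = ∑ T ∈ A.powerset, C (islandF G T) * X ^ T.card := by
  let f := SimpleGraph.Embedding.induce (G := G) (A : Set V)
  rw [X_mul_islandPoly]
  refine Finset.sum_nbij (Finset.map f.toEmbedding) (fun S _ => ?_)
    (Finset.map_injective _).injOn (fun T hT => ?_) fun S _ => ?_
  · exact Finset.mem_powerset.2 (Finset.map_subtype_subset S)
  · exact ⟨T.subtype (· ∈ A), Finset.mem_coe.2 (Finset.mem_univ _),
      Finset.subtype_map_of_mem (Finset.mem_powerset.1 hT)⟩
  · rw [islandF_map, Finset.card_map]

lemma sum_islandF_inter (G : SimpleGraph V) (A : Finset V) :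
    ∑ S : Finset V, C (islandF G (S ∩ A)) * X ^ S.card
      = (1 + X) ^ Aᶜ.card * (X * islandPoly (G.induce (A : Set V))) := by
  rw [X_mul_islandPoly_induce, sum_inter_mul_pow_card fun T => C (islandF G T)]

lemma islandPoly_of_card_eq_one (G : SimpleGraph V) (hV : Fintype.card V = 1) :
    islandPoly G = 1 := by
  obtain ⟨v, hv⟩ := Finset.card_eq_one.1 hV
  refine mul_left_cancel₀ X_ne_zero ?_
  rw [X_mul_islandPoly, ← Finset.powerset_univ, hv, ← insert_empty_eq,
    Finset.sum_powerset_insert (Finset.notMem_empty v)]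
  simp [islandF_empty, islandF_singleton]

theorem islandPoly_wedge_general (G : SimpleGraph V) (A B : Finset V)
    (hsep : IsSeparation G (A : Set V) B) (hclique : G.IsClique ((A ∩ B : Finset V) : Set V)) :
    islandPoly G
      = (1 + X) ^ (A.card - (A ∩ B).card) * islandPoly (G.induce (B : Set V))
        + (1 + X) ^ (B.card - (A ∩ B).card) * islandPoly (G.induce (A : Set V))
        - (1 + X) ^ (A.card + B.card - 2 * (A ∩ B).card)
          * islandPoly (G.induce ((A ∩ B : Finset V) : Set V)) := by
  have hcover : A ∪ B = Finset.univ := mod_cast hsep.union_eq_univ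
  have hcard : A.card + B.card = Fintype.card V + (A ∩ B).card := by
    rw [← Finset.card_union_add_card_inter, hcover, Finset.card_univ]
  have hA : Aᶜ.card = B.card - (A ∩ B).card := by rw [Finset.card_compl]; omega
  have hB : Bᶜ.card = A.card - (A ∩ B).card := by rw [Finset.card_compl]; omega
  have hAB : (A ∩ B)ᶜ.card = A.card + B.card - 2 * (A ∩ B).card := by
    rw [Finset.card_compl]; omega
  refine mul_left_cancel₀ X_ne_zero ?_
  calc
    X * islandPoly G
      = ∑ S : Finset V, C (islandF G (S ∩ A)) * X ^ S.card
          + ∑ S : Finset V, C (islandF G (S ∩ B)) * X ^ S.card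
          - ∑ S : Finset V, C (islandF G (S ∩ (A ∩ B))) * X ^ S.card := by
        rw [X_mul_islandPoly, ← Finset.sum_add_distrib, ← Finset.sum_sub_distrib]
        refine Finset.sum_congr rfl fun S _ => ?_
        rw [eq_sub_of_add_eq (hsep.islandF_add hclique S), C_sub, C_add, sub_mul, add_mul]
    _ = _ := by
        rw [sum_islandF_inter, sum_islandF_inter, sum_islandF_inter, hA, hB, hAB]
        ring

end IslandPoly

theorem islandPoly_wedge {V : Type*} [Fintype V] [DecidableEq V]
    (G : SimpleGraph V) (v₀ : V) (A B : Finset V)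
    (hinter : A ∩ B = {v₀}) (hcover : A ∪ B = Finset.univ)
    (h₁ : 1 ≤ A.card) (h₂ : 1 ≤ B.card)
    (hedge : ∀ a b : V, G.Adj a b → (a ∈ A ∧ b ∈ A) ∨ (a ∈ B ∧ b ∈ B)) :
    islandPoly G
      = (1 + Polynomial.X) ^ (A.card - 1) * islandPoly (G.induce (B : Set V))
        + (1 + Polynomial.X) ^ (B.card - 1) * islandPoly (G.induce (A : Set V))
        - (1 + Polynomial.X) ^ (A.card + B.card - 2) := by
  have hclique : G.IsClique ((A ∩ B : Finset V) : Set V) := by simp [hinter]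
  have h := islandPoly_wedge_general G A B ⟨mod_cast hcover, hedge⟩ hclique
  have hone : islandPoly (G.induce ((A ∩ B : Finset V) : Set V)) = 1 :=
    islandPoly_of_card_eq_one _ (by simp [hinter])
  rwa [hone, hinter, Finset.card_singleton, mul_one, mul_one] at h
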